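/- Let Δ ≥ 0, ω ≥ 0, χ ≥ 0 and ρ₁ > 0 be real numbers with Δ + ω > 0 and ρ₁² > 4·ω·χ. Suppose λ > 0 satisfies, for every t ∈ (0,1], the inequality (Δ + ω/t)·λ² − ρ₁·λ + t·χ ≥ 0. Then for every t with 0 < t ≤ 1 and 4·Δ·χ·t ≤ ρ₁² − 4·ω·χ, one has λ ≥ (ρ₁ + √(ρ₁² − 4·Δ·χ·t − 4·ω·χ)) / (2·(Δ + ω/t)). -/

import Mathlib

theorem stmt_3 (Δ ω χ ρ₁ lam : ℝ) (hΔ : 0 ≤ Δ) (hω : 0 ≤ ω) (hχ : 0 ≤ χ)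
    (hρ₁ : 0 < ρ₁) (hpos : 0 < Δ + ω) (hdisc : ρ₁ ^ 2 > 4 * ω * χ)
    (hlam : 0 < lam)
    (h : ∀ t : ℝ, 0 < t → t ≤ 1 → (Δ + ω / t) * lam ^ 2 - ρ₁ * lam + t * χ ≥ 0) :
    ∀ t : ℝ, 0 < t → t ≤ 1 → 4 * Δ * χ * t ≤ ρ₁ ^ 2 - 4 * ω * χ →
      lam ≥ (ρ₁ + Real.sqrt (ρ₁ ^ 2 - 4 * Δ * χ * t - 4 * ω * χ)) / (2 * (Δ + ω / t)) := by
  intro t ht ht1 hd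
  have key : ∀ u : ℝ, 0 < u → u * lam ≤ 1 → 0 ≤ χ * u ^ 2 + (Δ * lam - ρ₁) * u + ω := by
    intro u hu hul
    have h1 := h (u * lam) (by positivity) hul
    have e : (Δ + ω / (u * lam)) * lam ^ 2 - ρ₁ * lam + u * lam * χ
        = (lam / u) * (χ * u ^ 2 + (Δ * lam - ρ₁) * u + ω) := by
      field_simp
      ring
    rw [e] at h1
    exact nonneg_of_mul_nonneg_right h1 (by positivity)
  have hA : 0 < Δ + ω / t := by
    have : ω ≤ ω / t := le_div_self hω ht ht1
    linarith
  obtain ⟨D, hD⟩ : ∃ D, D = Real.sqrt (ρ₁ ^ 2 - 4 * Δ * χ * t - 4 * ω * χ) := ⟨_, rfl⟩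
  have hD0 : 0 ≤ D := hD ▸ Real.sqrt_nonneg _
  have hD2 : D ^ 2 = ρ₁ ^ 2 - 4 * Δ * χ * t - 4 * ω * χ := by
    rw [hD]; exact Real.sq_sqrt (by linarith)
  rw [← hD]
  by_contra hlt
  push Not at hlt
  obtain ⟨L, hL⟩ : ∃ L, L = (ρ₁ + D) / (2 * (Δ + ω / t)) := ⟨_, rfl⟩
  rw [← hL] at hlt
  have hL0 : 0 < L := hlam.trans hlt
  have hLA : 2 * (Δ * t + ω) * L = (ρ₁ + D) * t := by
    rw [hL]
    have h2 : Δ + ω / t = (Δ * t + ω) / t := by field_simp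
    have h3 : 0 < Δ * t + ω := by
      rw [h2] at hA
      exact (div_pos_iff_of_pos_right ht).1 hA
    rw [h2]; field_simp
  obtain ⟨v, hv⟩ : ∃ v, v = t / L := ⟨_, rfl⟩
  have hv0 : 0 < v := hv ▸ by positivity
  have htv : t = v * L := by rw [hv]; field_simp
  have hvl : v * lam < 1 := by nlinarith
  have e1 : 2 * (Δ * t + ω) = (ρ₁ + D) * v := by
    apply mul_right_cancel₀ hL0.ne'
    rw [hLA]; nth_rw 1 [htv]; ring
  have e2 : 2 * χ * v = ρ₁ - D := by
    have : (ρ₁ + D) * (2 * χ * v - (ρ₁ - D)) = 0 := by linear_combination (-2 * χ) * e1 + hD2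
    rcases mul_eq_zero.1 this with h | h <;> linarith
  have fv : χ * v ^ 2 + (Δ * L - ρ₁) * v + ω = 0 := by
    linear_combination (v/2) * e2 + e1 / 2 - Δ * htv
  rcases hΔ.eq_or_lt with h0 | h0
  · subst h0
    have hDp : 0 < D := by
      rcases hD0.eq_or_lt with h | h
      · rw [← h] at hD2; nlinarith
      · exact h
    obtain ⟨e, he, he1, he2⟩ : ∃ e : ℝ, 0 < e ∧ (v + e) * lam ≤ 1 ∧ χ * e < D := by
      refine ⟨min ((1 - v * lam) / lam) (D / (χ + 1)), ?_, ?_, ?_⟩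
      · have : 0 < 1 - v * lam := by linarith
        positivity
      · have := (le_div_iff₀ hlam).1 (min_le_left ((1 - v * lam) / lam) (D / (χ + 1)))
        linarith
      · have h1 := min_le_right ((1 - v * lam) / lam) (D / (χ + 1))
        have h2 : χ * (D / (χ + 1)) < D := by
          rw [← mul_div_assoc, div_lt_iff₀ (by positivity)]; nlinarith
        exact (mul_le_mul_of_nonneg_left h1 hχ).trans_lt h2
    have := key (v + e) (by positivity) he1
    have h5 : χ * (v + e) ^ 2 + (0 * lam - ρ₁) * (v + e) + ω = e * (χ * e - D) := by
      linear_combination fv + e * e2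
    rw [h5] at this
    nlinarith
  · have := key v hv0 hvl.le
    have h6 : 0 < Δ * (L - lam) * v := by
      have : 0 < L - lam := by linarith
      positivity
    nlinarith
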